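/- arXiv:1309.6090 — 2 statements merged into one kernel-verified Lean document; each statement's English description precedes it below -/
import Mathlib

section
/- Let G be a controllable graph on n vertices with adjacency matrix A (over the rationals), and let H be any graph on n vertices with adjacency matrix B. Then the characteristic polynomial of B equals that of A and the characteristic polynomial of the adjacency matrix of the complement of H equals that of the complement of G if and only if there exists a rational orthogonal n×n matrix Q with Qe = e and QᵀAQ = B, where e is the all-ones vector. -/
open Matrix

open scoped Classical in
/-- The (0,1)-adjacency matrix of a simple graph on `Fin n`, with entries in `R`. -/
noncomputable def adjMat {n : ℕ} (R : Type*) [Zero R] [One R] (G : SimpleGraph (Fin n)) :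
    Matrix (Fin n) (Fin n) R :=
  Matrix.of fun i j => if G.Adj i j then 1 else 0

/-- The walk matrix `W = [e, Ae, A²e, …, A^{n−1}e]` of a square matrix `A`,
where `e` is the all-ones vector: the `j`-th column is `A^j e`. -/
noncomputable def walkMatrix {R : Type*} [CommRing R] {n : ℕ} (A : Matrix (Fin n) (Fin n) R) :
    Matrix (Fin n) (Fin n) R :=
  Matrix.of fun i j => (A ^ (j : ℕ) *ᵥ fun _ => 1) i

/-!
By the matrix determinant lemma applied to `1 - X • M`, the reversed characteristic polynomials of
`M - u vᵀ` and of `M` have ratio `1 + X ∑ₖ (v ⬝ Mᵏ u) Xᵏ` as power series. Since the complement of a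
graph with adjacency matrix `A` has adjacency matrix `-(A - e eᵀ) - 1`, the generalized spectrum
therefore determines all the numbers `e ⬝ Aᵏ e`. These are the entries of `Wᵀ W` and `Wᵀ A W`, for
`W` the walk matrix. So if `W` and `V` are the walk matrices of two graphs with the same generalized
spectrum and `W` is invertible, then `Q = W V⁻¹` is orthogonal, conjugates one adjacency matrix
into the other, and fixes `e`, the first column of both `W` and `V`. Conversely, a `Q` with these
properties also conjugates `A - e eᵀ` into the corresponding matrix of the other graph.
-/

open scoped PowerSeries

variable {m R : Type*} [Fintype m] [DecidableEq m] [CommRing R]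

section WalkSeries

/-- The vector of power series `∑ₖ (Mᵏ u) Xᵏ = (1 - X M)⁻¹ u`, the walk generating function of `M`
started at `u`. -/
noncomputable def walkSeries (M : Matrix m m R) (u : m → R) : m → R⟦X⟧ :=
  fun i => PowerSeries.mk fun k => (M ^ k *ᵥ u) i

theorem one_sub_X_smul_mulVec_walkSeries (M : Matrix m m R) (u : m → R) :
    (1 - (PowerSeries.X : R⟦X⟧) • M.map PowerSeries.C) *ᵥ walkSeries M u =
      fun i => PowerSeries.C (u i) := by
  rw [sub_mulVec, one_mulVec, smul_mulVec, sub_eq_iff_eq_add]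
  ext i k
  rcases k with _ | k
  · simp [walkSeries]
  · have hsucc : M ^ (k + 1) *ᵥ u = M *ᵥ (M ^ k *ᵥ u) := by rw [pow_succ', mulVec_mulVec]
    simpa [walkSeries, PowerSeries.coeff_succ_X_mul, mulVec, dotProduct] using congrFun hsucc i

theorem C_dotProduct_walkSeries (M : Matrix m m R) (u v : m → R) :
    (fun i => PowerSeries.C (v i)) ⬝ᵥ walkSeries M u =
      PowerSeries.mk fun k => v ⬝ᵥ (M ^ k *ᵥ u) := by
  ext k
  simp [walkSeries, dotProduct]

theorem coe_charpolyRev (M : Matrix m m R) :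
    (M.charpolyRev : R⟦X⟧) = (1 - (PowerSeries.X : R⟦X⟧) • M.map PowerSeries.C).det := by
  rw [charpolyRev, ← Polynomial.coeToPowerSeries.ringHom_apply, RingHom.map_det]
  congr 1
  ext1 i j
  by_cases h : i = j <;> simp [h, PowerSeries.X_mul]

theorem isUnit_coe_charpolyRev (M : Matrix m m R) : IsUnit (M.charpolyRev : R⟦X⟧) := by
  simp [PowerSeries.isUnit_iff_constantCoeff, Polynomial.coeff_zero_eq_eval_zero]

theorem coe_charpolyRev_sub_vecMulVec (M : Matrix m m R) (u v : m → R) :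
    ((M - vecMulVec u v).charpolyRev : R⟦X⟧) =
      (M.charpolyRev : R⟦X⟧) * (1 + PowerSeries.X * PowerSeries.mk fun k => v ⬝ᵥ (M ^ k *ᵥ u)) := by
  set P : Matrix m m R⟦X⟧ := 1 - (PowerSeries.X : R⟦X⟧) • M.map PowerSeries.C with hP
  set w := walkSeries M u
  set v' : m → R⟦X⟧ := fun i => PowerSeries.C (v i) with hv'
  have hw : P *ᵥ w = fun i => PowerSeries.C (u i) := one_sub_X_smul_mulVec_walkSeries M u
  have hfactor : 1 - (PowerSeries.X : R⟦X⟧) • (M - vecMulVec u v).map PowerSeries.C =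
      P * (1 + replicateCol Unit ((PowerSeries.X : R⟦X⟧) • w) * replicateRow Unit v') := by
    rw [← vecMulVec_eq, Matrix.mul_add, Matrix.mul_one, mul_vecMulVec, mulVec_smul, hw]
    ext1 i j
    simp only [hP, hv', Matrix.add_apply, Matrix.sub_apply, Matrix.smul_apply, map_apply,
      vecMulVec_apply, Pi.smul_apply, smul_eq_mul, map_sub, map_mul]
    ring
  rw [coe_charpolyRev, coe_charpolyRev, hfactor, det_mul,
    det_one_add_replicateCol_mul_replicateRow, dotProduct_smul, C_dotProduct_walkSeries,
    smul_eq_mul]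

theorem dotProduct_pow_mulVec_eq_of_charpoly_eq {M N : Matrix m m R} {u v u' v' : m → R}
    (h : M.charpoly = N.charpoly)
    (h' : (M - vecMulVec u v).charpoly = (N - vecMulVec u' v').charpoly) (k : ℕ) :
    v ⬝ᵥ (M ^ k *ᵥ u) = v' ⬝ᵥ (N ^ k *ᵥ u') := by
  have hrev : M.charpolyRev = N.charpolyRev := by
    rw [← reverse_charpoly, h, reverse_charpoly]
  have hrev' : (M - vecMulVec u v).charpolyRev = (N - vecMulVec u' v').charpolyRev := by
    rw [← reverse_charpoly, h', reverse_charpoly]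
  have hseries := congrArg ((↑) : Polynomial R → R⟦X⟧) hrev'
  rw [coe_charpolyRev_sub_vecMulVec, coe_charpolyRev_sub_vecMulVec, hrev,
    (isUnit_coe_charpolyRev N).mul_right_inj, add_right_inj] at hseries
  simpa [PowerSeries.coeff_succ_X_mul] using congrArg (PowerSeries.coeff (k + 1)) hseries

end WalkSeries

section KrylovMatrix

/-- The Krylov matrix `[u, A u, …, Aⁿ⁻¹ u]`, a generalization of the walk matrix to an arbitrary
starting vector `u` and number `n` of columns. -/
noncomputable def krylovMatrix (A : Matrix m m R) (u : m → R) (n : ℕ) : Matrix m (Fin n) R :=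
  Matrix.of fun i j => (A ^ (j : ℕ) *ᵥ u) i

theorem walkMatrix_eq_krylovMatrix {n : ℕ} (A : Matrix (Fin n) (Fin n) R) :
    walkMatrix A = krylovMatrix A (fun _ => 1) n :=
  rfl

@[simp]
theorem krylovMatrix_apply_zero (A : Matrix m m R) (u : m → R) (n : ℕ) [NeZero n] (i : m) :
    krylovMatrix A u n i 0 = u i := by
  simp [krylovMatrix]

theorem krylovMatrix_transpose_mul_pow_mul_apply (A : Matrix m m R) (u v : m → R) {n p : ℕ} (k : ℕ)
    (i : Fin n) (j : Fin p) :
    ((krylovMatrix Aᵀ v n)ᵀ * A ^ k * krylovMatrix A u p) i j =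
      v ⬝ᵥ (A ^ (i + k + j : ℕ) *ᵥ u) := by
  calc ((krylovMatrix Aᵀ v n)ᵀ * A ^ k * krylovMatrix A u p) i j
      = (Aᵀ ^ (i : ℕ) *ᵥ v) ⬝ᵥ (A ^ k *ᵥ (A ^ (j : ℕ) *ᵥ u)) := by
        rw [Matrix.mul_assoc]; rfl
    _ = v ⬝ᵥ (A ^ (i + k + j : ℕ) *ᵥ u) := by
        rw [← transpose_pow, mulVec_transpose, ← dotProduct_mulVec, mulVec_mulVec, mulVec_mulVec,
          pow_add, pow_add, Matrix.mul_assoc]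

theorem mulVec_eq_of_mul_krylovMatrix_eq {n : ℕ} {Q A B : Matrix (Fin n) (Fin n) R}
    {u v : Fin n → R} (h : Q * krylovMatrix B v n = krylovMatrix A u n) : Q *ᵥ v = u := by
  ext i
  have : NeZero n := ⟨i.pos.ne'⟩
  simpa [mul_apply, mulVec, dotProduct] using congrFun (congrFun h i) 0

end KrylovMatrix

section OrthogonalSimilarity

theorem exists_orthogonal_of_transpose_mul_self_eq {W V A B : Matrix m m R} (hW : IsUnit W.det)
    (hgram : Wᵀ * W = Vᵀ * V) (hform : Wᵀ * A * W = Vᵀ * B * V) :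
    ∃ Q : Matrix m m R, Qᵀ * Q = 1 ∧ Q * V = W ∧ Qᵀ * A * Q = B := by
  have hV : IsUnit V.det := by
    have hdet : W.det * W.det = V.det * V.det := by simpa using congrArg det hgram
    exact isUnit_of_mul_isUnit_left (hdet ▸ hW.mul hW)
  have hVinv : V * V⁻¹ = 1 := mul_nonsing_inv V hV
  have hVinv' : V⁻¹ᵀ * Vᵀ = 1 := by rw [← transpose_mul, hVinv, transpose_one]
  refine ⟨W * V⁻¹, ?_, nonsing_inv_mul_cancel_right _ _ hV, ?_⟩
  · calc (W * V⁻¹)ᵀ * (W * V⁻¹) = V⁻¹ᵀ * (Wᵀ * W) * V⁻¹ := by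
          simp only [transpose_mul, Matrix.mul_assoc]
      _ = (V⁻¹ᵀ * Vᵀ) * (V * V⁻¹) := by rw [hgram]; simp only [Matrix.mul_assoc]
      _ = 1 := by rw [hVinv, hVinv', Matrix.mul_one]
  · calc (W * V⁻¹)ᵀ * A * (W * V⁻¹) = V⁻¹ᵀ * (Wᵀ * A * W) * V⁻¹ := by
          simp only [transpose_mul, Matrix.mul_assoc]
      _ = (V⁻¹ᵀ * Vᵀ) * B * (V * V⁻¹) := by rw [hform]; simp only [Matrix.mul_assoc]
      _ = B := by rw [hVinv, hVinv', Matrix.mul_one, Matrix.one_mul]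

theorem exists_orthogonal_of_dotProduct_pow_mulVec_eq {n : ℕ} {A B : Matrix (Fin n) (Fin n) R}
    {u v : Fin n → R} (hA : A.IsSymm) (hB : B.IsSymm) (hu : IsUnit (krylovMatrix A u n).det)
    (h : ∀ k : ℕ, u ⬝ᵥ (A ^ k *ᵥ u) = v ⬝ᵥ (B ^ k *ᵥ v)) :
    ∃ Q : Matrix (Fin n) (Fin n) R, Qᵀ * Q = 1 ∧ Q *ᵥ v = u ∧ Qᵀ * A * Q = B := by
  have hforms (k : ℕ) : (krylovMatrix A u n)ᵀ * A ^ k * krylovMatrix A u n =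
      (krylovMatrix B v n)ᵀ * B ^ k * krylovMatrix B v n := by
    ext i j
    have hAk := krylovMatrix_transpose_mul_pow_mul_apply A u u k i j
    have hBk := krylovMatrix_transpose_mul_pow_mul_apply B v v k i j
    rw [hA.eq] at hAk
    rw [hB.eq] at hBk
    rw [hAk, hBk, h]
  obtain ⟨Q, hQ, hQV, hQAQ⟩ := exists_orthogonal_of_transpose_mul_self_eq hu
    (by simpa using hforms 0) (by simpa using hforms 1)
  exact ⟨Q, hQ, mulVec_eq_of_mul_krylovMatrix_eq hQV, hQAQ⟩

theorem charpoly_mul_mul_of_mul_eq_one {P Q : Matrix m m R} (h : P * Q = 1) (M : Matrix m m R) :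
    (P * M * Q).charpoly = M.charpoly := by
  rw [charpoly_mul_comm, ← Matrix.mul_assoc, mul_eq_one_comm.1 h, Matrix.one_mul]

theorem transpose_mul_sub_vecMulVec_mul {Q A : Matrix m m R} {u v : m → R}
    (hQ : Qᵀ * Q = 1) (hQv : Q *ᵥ v = u) :
    Qᵀ * (A - vecMulVec u u) * Q = Qᵀ * A * Q - vecMulVec v v := by
  have hQu : Qᵀ *ᵥ u = v := by rw [← hQv, mulVec_mulVec, hQ, one_mulVec]
  rw [Matrix.mul_sub, Matrix.sub_mul, mul_vecMulVec, vecMulVec_mul, ← mulVec_transpose, hQu]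

theorem charpoly_eq_and_charpoly_sub_vecMulVec_eq_iff {n : ℕ} {A B : Matrix (Fin n) (Fin n) R}
    {u v : Fin n → R} (hA : A.IsSymm) (hB : B.IsSymm) (hu : IsUnit (krylovMatrix A u n).det) :
    (B.charpoly = A.charpoly ∧ (B - vecMulVec v v).charpoly = (A - vecMulVec u u).charpoly) ↔
      ∃ Q : Matrix (Fin n) (Fin n) R, Qᵀ * Q = 1 ∧ Q *ᵥ v = u ∧ Qᵀ * A * Q = B := by
  constructor
  · rintro ⟨h, h'⟩
    exact exists_orthogonal_of_dotProduct_pow_mulVec_eq hA hB hu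
      (dotProduct_pow_mulVec_eq_of_charpoly_eq h.symm h'.symm)
  · rintro ⟨Q, hQ, hQv, rfl⟩
    rw [← transpose_mul_sub_vecMulVec_mul hQ hQv]
    exact ⟨charpoly_mul_mul_of_mul_eq_one hQ _, charpoly_mul_mul_of_mul_eq_one hQ _⟩

end OrthogonalSimilarity

section Complement

theorem charpoly_neg (M : Matrix m m R) :
    (-M).charpoly = (-1) ^ Fintype.card m * M.charpoly.comp (-Polynomial.X) := by
  rw [charpoly, charpoly, ← Polynomial.coe_compRingHom_apply, RingHom.map_det, ← det_neg]
  congr 1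
  ext1 i j
  rcases eq_or_ne i j with rfl | hij
  · simp only [charmatrix_apply_eq, Matrix.neg_apply, map_neg, RingHom.mapMatrix_apply, map_apply,
      Polynomial.coe_compRingHom, Polynomial.sub_comp, Polynomial.X_comp, Polynomial.C_comp]
    ring
  · simp [hij]

theorem charpoly_neg_sub_one_eq_iff {M N : Matrix m m R} :
    (-M - 1).charpoly = (-N - 1).charpoly ↔ M.charpoly = N.charpoly := by
  have hcongr {M N : Matrix m m R} (h : M.charpoly = N.charpoly) :
      (-M - 1).charpoly = (-N - 1).charpoly := by
    rw [← map_one (scalar m), charpoly_sub_scalar, charpoly_sub_scalar, charpoly_neg, charpoly_neg,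
      h]
  -- `M ↦ -M - 1` is an involution.
  exact ⟨fun h => by simpa using hcongr h, hcongr⟩

theorem isSymm_adjMat {R : Type*} [Zero R] [One R] {n : ℕ} (G : SimpleGraph (Fin n)) :
    (adjMat R G).IsSymm :=
  IsSymm.ext fun i j => by by_cases h : G.Adj i j <;> simp [adjMat, h, G.adj_comm j i]

theorem adjMat_compl {R : Type*} [NonAssocRing R] {n : ℕ} (G : SimpleGraph (Fin n)) :
    adjMat R Gᶜ = -(adjMat R G - vecMulVec (fun _ => 1) (fun _ => 1)) - 1 := by
  ext i j
  rcases eq_or_ne i j with rfl | hij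
  · simp [adjMat, vecMulVec_apply]
  · by_cases h : G.Adj i j <;> simp [adjMat, vecMulVec_apply, hij, h]

end Complement

theorem stmt_0_general {n : ℕ} (G H : SimpleGraph (Fin n))
    (hctrl : IsUnit (walkMatrix (adjMat R G)).det) :
    ((adjMat R H).charpoly = (adjMat R G).charpoly ∧
        (adjMat R Hᶜ).charpoly = (adjMat R Gᶜ).charpoly) ↔
      ∃ Q : Matrix (Fin n) (Fin n) R,
        Qᵀ * Q = 1 ∧ Q *ᵥ (fun _ => 1) = (fun _ => 1) ∧ Qᵀ * adjMat R G * Q = adjMat R H := by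
  rw [walkMatrix_eq_krylovMatrix] at hctrl
  rw [adjMat_compl, adjMat_compl, charpoly_neg_sub_one_eq_iff]
  exact charpoly_eq_and_charpoly_sub_vecMulVec_eq_iff (isSymm_adjMat G) (isSymm_adjMat H) hctrl

/-- For a controllable graph `G`, a graph `H` is cospectral with `G`
with cospectral complements iff there is a rational orthogonal matrix `Q` with `Qe = e`
and `QᵀA(G)Q = A(H)`. -/
theorem stmt_0 {n : ℕ} (G H : SimpleGraph (Fin n))
    (A : Matrix (Fin n) (Fin n) ℚ) (hA : A = adjMat ℚ G)
    (B : Matrix (Fin n) (Fin n) ℚ) (hB : B = adjMat ℚ H)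
    (hctrl : (walkMatrix A).det ≠ 0) :
    (B.charpoly = A.charpoly ∧
        (adjMat ℚ (Hᶜ)).charpoly = (adjMat ℚ (Gᶜ)).charpoly) ↔
      ∃ Q : Matrix (Fin n) (Fin n) ℚ,
        Qᵀ * Q = 1 ∧ Q *ᵥ (fun _ => 1) = (fun _ => 1) ∧ Qᵀ * A * Q = B := by
  subst hA hB
  exact stmt_0_general G H hctrl.isUnit
end

section
/- Let G be a controllable graph on n vertices with adjacency matrix A and walk matrix W. Let Q be a rational orthogonal matrix with Qe = e such that QᵀAQ is a symmetric (0,1)-matrix with zero diagonal, with level ℓ, and let p be an odd prime. If p divides det(W) but p² does not divide det(W), then p does not divide ℓ. -/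
open Matrix

/-!
Write `e` for the all-ones vector and `W` for the walk matrix of a symmetric integer matrix `A`.
If `p ^ 2 ∤ det W`, then `W` modulo `p` has a left kernel of dimension at most one: two independent
kernel vectors would allow two rows of `W` to be replaced at the cost of a factor `p` each.

Suppose that `p ∣ ℓ` and put `P = ℓQ` and `B = QᵀAQ`. Then `AP = PB`, while `Pᵀe` vanishes modulo
`p` and `PᵀP` modulo `p ^ 2`. The first two facts place the column space of `P` modulo `p` in the
left kernel of `W`. If this space is nonzero, it is an `A`-invariant line, spanned by some `u = Pv`
with `Au ≡ μu` modulo `p`, and `uᵀu` and `uᵀAu` vanish modulo `p ^ 2`. Since `u` spans the left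
kernel and is orthogonal to itself, it lies in the range of `W`, so `u ≡ q(A)e` modulo `p`; as `W`
is singular modulo `p`, `q` can be chosen with `deg q + 1 < n`. The coefficients `c` of `(X - μ)q`
then satisfy `Wc = (A - μ)q(A)e ≡ 0` modulo `p` and, by the symmetry of `A`, `uᵀWc ≡ 0` modulo
`p ^ 2`. Replacing one row of `W` by means of `u` and then one column by means of `c` shows
`p ^ 2 ∣ det W`, a contradiction. Hence `p` divides `P = ℓQ`, and `ℓ` is not minimal.
-/

section Determinant

variable {ι R : Type*} [Fintype ι] [DecidableEq ι] [CommRing R] {M : Matrix ι ι R} {p : R}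

lemma mul_det_eq_of_vecMul_eq_smul {v a : ι → R} (h : v ᵥ* M = p • a) (i : ι) :
    v i * M.det = p * (M.updateRow i a).det := by
  rw [← det_updateRow_smul, ← h, vecMul_eq_sum, det_updateRow_sum, smul_eq_mul]

lemma mul_det_eq_of_mulVec_eq_smul {v a : ι → R} (h : M *ᵥ v = p • a) (i : ι) :
    v i * M.det = p * (M.updateCol i a).det := by
  rw [← vecMul_transpose] at h
  rw [← det_transpose M, mul_det_eq_of_vecMul_eq_smul h i, updateRow_transpose, det_transpose]

lemma vecMul_updateRow_of_eq_zero {v : ι → R} {i : ι} (hv : v i = 0) (a : ι → R) :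
    v ᵥ* M.updateRow i a = v ᵥ* M := by
  rw [vecMul_eq_sum, vecMul_eq_sum]
  refine Finset.sum_congr rfl fun k _ => ?_
  obtain rfl | hk := eq_or_ne k i
  · simp only [hv, zero_smul]
  · rw [updateRow_ne hk]

variable [IsDomain R]

lemma dvd_mul_sub_mul_of_vecMul_eq_smul (hp : Prime p) (hM : ¬ p ^ 2 ∣ M.det) {u v a b : ι → R}
    (hu : u ᵥ* M = p • a) (hv : v ᵥ* M = p • b) {i : ι} (hi : ¬ p ∣ u i) (j : ι) :
    p ∣ u i * v j - v i * u j := by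
  let w : ι → R := u i • v - v i • u
  have hwi : w i = 0 := by simp [w, mul_comm]
  have hw : w ᵥ* M.updateRow i a = p • (u i • b - v i • a) := by
    rw [vecMul_updateRow_of_eq_zero hwi, sub_vecMul, smul_vecMul, smul_vecMul, hu, hv, smul_sub,
      smul_comm p, smul_comm p]
  have hdet : u i * (w j * M.det) =
      p ^ 2 * ((M.updateRow i a).updateRow j (u i • b - v i • a)).det := by
    linear_combination w j * mul_det_eq_of_vecMul_eq_smul hu i +
      p * mul_det_eq_of_vecMul_eq_smul hw j
  by_contra hj
  exact hM (hp.pow_dvd_of_dvd_mul_left 2 hj (hp.pow_dvd_of_dvd_mul_left 2 hi ⟨_, hdet⟩))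

lemma sq_dvd_det_of_vecMul_mulVec_eq_smul (hp : Prime p) {u v a b : ι → R} (hu : u ᵥ* M = p • a)
    (hv : M *ᵥ v = p • b) {i j : ι} (hi : ¬ p ∣ u i) (hj : ¬ p ∣ v j)
    (huv : p ^ 2 ∣ u ⬝ᵥ M *ᵥ v) : p ^ 2 ∣ M.det := by
  obtain ⟨t, ht⟩ : p ∣ a ⬝ᵥ v := by
    rw [dotProduct_mulVec, hu, smul_dotProduct, smul_eq_mul, sq] at huv
    exact (mul_dvd_mul_iff_left hp.ne_zero).1 huv
  have hrow : M.updateRow i a *ᵥ v = p • Function.update b i t := by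
    rw [updateRow_mulVec, hv, ht, ← smul_eq_mul, Function.update_smul]
  have hdet : u i * (v j * M.det) =
      p ^ 2 * ((M.updateRow i a).updateCol j (Function.update b i t)).det := by
    linear_combination v j * mul_det_eq_of_vecMul_eq_smul hu i +
      p * mul_det_eq_of_mulVec_eq_smul hrow j
  exact hp.pow_dvd_of_dvd_mul_left 2 hj (hp.pow_dvd_of_dvd_mul_left 2 hi ⟨_, hdet⟩)

end Determinant

lemma exists_mulVec_eq_iff_forall_dotProduct_eq_zero {m n K : Type*} [Fintype m] [Fintype n]
    [Field K] {M : Matrix m n K} {b : m → K} :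
    (∃ x, M *ᵥ x = b) ↔ ∀ y, y ᵥ* M = 0 → y ⬝ᵥ b = 0 := by
  classical
  refine ⟨?_, fun h => ?_⟩
  · rintro ⟨x, rfl⟩ y hy
    rw [dotProduct_mulVec, hy, zero_dotProduct]
  · by_contra hb
    have hmem : b ∉ LinearMap.range M.mulVecLin := hb
    obtain ⟨f, hfb, hf⟩ := Submodule.exists_le_ker_of_notMem hmem
    obtain ⟨y, rfl⟩ := (dotProductEquiv K m).surjective f
    refine hfb (h y (dotProduct_eq_zero _ fun x => ?_))
    rw [← dotProduct_mulVec]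
    exact hf ⟨x, rfl⟩

section WalkMatrix

open Polynomial

variable {R S : Type*} [CommRing R] [CommRing S] {n : ℕ}

lemma walkMatrix_map (φ : R →+* S) (A : Matrix (Fin n) (Fin n) R) :
    walkMatrix (A.map φ) = (walkMatrix A).map φ := by
  ext i j
  have hpow : A.map φ ^ (j : ℕ) = (A ^ (j : ℕ)).map φ := (map_pow φ.mapMatrix A j).symm
  have hone : (fun _ : Fin n => (1 : S)) = φ ∘ fun _ => 1 := funext fun _ => (map_one φ).symm
  simp only [walkMatrix, of_apply, map_apply, hpow, hone, RingHom.map_mulVec]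

lemma mul_walkMatrix_apply {m : Type*} [Fintype m] [DecidableEq m]
    {A : Matrix (Fin n) (Fin n) R} {B : Matrix m m R} {T : Matrix m (Fin n) R}
    (hT : T * A = B * T) (i : m) (j : Fin n) :
    (T * walkMatrix A) i j = (B ^ (j : ℕ) *ᵥ (T *ᵥ 1)) i := by
  have hpow (k : ℕ) : T * A ^ k = B ^ k * T := by
    induction k with
    | zero => rw [pow_zero, pow_zero, Matrix.mul_one, Matrix.one_mul]
    | succ k ih => rw [pow_succ, ← Matrix.mul_assoc, ih, Matrix.mul_assoc, hT, pow_succ,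
        Matrix.mul_assoc]
  rw [mulVec_mulVec, ← hpow, ← mulVec_mulVec]
  rfl

lemma ofFn_toFn_of_degree_lt [DecidableEq R] {f : R[X]} (hf : f.degree < n) :
    ofFn n (toFn n f) = f := by
  obtain rfl | hf0 := eq_or_ne f 0
  · rw [map_zero, map_zero]
  · exact ofFn_comp_toFn_eq_id_of_natDegree_lt ((natDegree_lt_iff_degree_lt hf0).2 hf)

lemma toFn_ne_zero_of_degree_lt {f : R[X]} (hf : f.degree < n) (hf0 : f ≠ 0) : toFn n f ≠ 0 := by
  classical
  intro h
  rw [← ofFn_toFn_of_degree_lt hf, h, map_zero] at hf0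
  exact hf0 rfl

lemma walkMatrix_mulVec [DecidableEq R] (A : Matrix (Fin n) (Fin n) R) (c : Fin n → R) :
    walkMatrix A *ᵥ c = aeval A (ofFn n c) *ᵥ 1 := by
  simp only [ofFn_eq_sum_monomial, map_sum, aeval_monomial, Algebra.algebraMap_eq_smul_one,
    smul_mul_assoc, one_mul, sum_mulVec, smul_mulVec]
  ext i
  simp only [mulVec, dotProduct, walkMatrix, of_apply, Finset.sum_apply, Pi.smul_apply, smul_eq_mul,
    Pi.one_apply, mul_comm (c _)]

lemma walkMatrix_mulVec_toFn (A : Matrix (Fin n) (Fin n) R) {f : R[X]} (hf : f.degree < n) :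
    walkMatrix A *ᵥ toFn n f = aeval A f *ᵥ 1 := by
  classical
  rw [walkMatrix_mulVec, ofFn_toFn_of_degree_lt hf]

lemma map_comp_aeval_mulVec_one (φ : R →+* S) (A : Matrix (Fin n) (Fin n) R) (q : R[X]) :
    φ ∘ (aeval A q *ᵥ 1) = aeval (A.map φ) (q.map φ) *ᵥ 1 := by
  have haeval : (aeval A q).map φ = aeval (A.map φ) (q.map φ) :=
    map_aeval_eq_aeval_map (ψ := φ.mapMatrix)
      (by ext r i j; simp [algebraMap_matrix_apply, apply_ite φ]) q A
  have hone : φ ∘ (1 : Fin n → R) = 1 := funext fun _ => map_one φ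
  ext i
  rw [← haeval, ← hone, Function.comp_apply, RingHom.map_mulVec]

lemma exists_degree_add_one_lt_aeval_mulVec_one_eq {K : Type*} [Field K]
    {A : Matrix (Fin n) (Fin n) K} (hA : (walkMatrix A).det = 0) (y : Fin n → K) :
    ∃ q : K[X], q.degree + 1 < n ∧ aeval A q *ᵥ 1 = walkMatrix A *ᵥ y := by
  classical
  obtain ⟨c, hc0, hc⟩ := exists_mulVec_eq_zero_iff.2 hA
  let f : K[X] := ofFn n c
  have hf0 : f ≠ 0 := (map_ne_zero_iff _ (injective_ofFn n)).2 hc0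
  have hfA : aeval A f *ᵥ 1 = 0 := by rw [← walkMatrix_mulVec, hc]
  refine ⟨ofFn n y % f, ?_, ?_⟩
  · exact (Nat.WithBot.add_one_le_of_lt (degree_mod_lt _ hf0)).trans_lt (ofFn_degree_lt c)
  · conv_rhs => rw [walkMatrix_mulVec, ← EuclideanDomain.mod_add_div (ofFn n y) f, mul_comm f,
      map_add, map_mul, add_mulVec, ← mulVec_mulVec, hfA, mulVec_zero, add_zero]

end WalkMatrix

lemma sq_dvd_dotProduct_mulVec_sub_smul {ι R : Type*} [Fintype ι] [CommRing R] {p : R}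
    {M : Matrix ι ι R} (hM : M.IsSymm) {u β x w : ι → R} {m : R}
    (hu : M *ᵥ u - m • u = p • β) (hx : x - u = p • w)
    (huu : p ^ 2 ∣ u ⬝ᵥ u) (huMu : p ^ 2 ∣ u ⬝ᵥ M *ᵥ u) :
    p ^ 2 ∣ u ⬝ᵥ (M *ᵥ x - m • x) := by
  have hexpand : u ⬝ᵥ (M *ᵥ x - m • x) =
      u ⬝ᵥ M *ᵥ u - m * u ⬝ᵥ u + (M *ᵥ u - m • u) ⬝ᵥ (x - u) := by
    have hsymm : u ⬝ᵥ M *ᵥ x = (M *ᵥ u) ⬝ᵥ x := by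
      rw [dotProduct_mulVec, ← mulVec_transpose, hM.eq]
    simp only [dotProduct_sub, sub_dotProduct, dotProduct_smul, smul_dotProduct, smul_eq_mul, hsymm,
      dotProduct_comm (M *ᵥ u) u]
    ring
  rw [hexpand, hu, hx, smul_dotProduct, dotProduct_smul, smul_smul, ← sq]
  exact dvd_add (dvd_sub huMu (huu.mul_left m)) (dvd_mul_right _ _)

section Reduction

open Polynomial

variable {R K : Type*} [CommRing R] [Field K] {p : R} {φ : R →+* K}

lemma comp_eq_zero_iff_exists_eq_smul {ι : Type*} (hker : ∀ a, φ a = 0 ↔ p ∣ a) {v : ι → R} :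
    φ ∘ v = 0 ↔ ∃ w, v = p • w := by
  simp only [funext_iff, Function.comp_apply, Pi.zero_apply, hker, Pi.smul_apply, smul_eq_mul]
  exact Classical.skolem

variable [IsDomain R]

lemma exists_eq_smul_of_vecMul_map_eq_zero {ι : Type*} [Fintype ι] [DecidableEq ι]
    (hφ : Function.Surjective φ) (hker : ∀ a, φ a = 0 ↔ p ∣ a) (hp : Prime p)
    {M : Matrix ι ι R} (hM : ¬ p ^ 2 ∣ M.det) {u v : ι → K} (hu0 : u ≠ 0)
    (hu : u ᵥ* M.map φ = 0) (hv : v ᵥ* M.map φ = 0) : ∃ c : K, v = c • u := by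
  obtain ⟨u, rfl⟩ := hφ.comp_left u
  obtain ⟨v, rfl⟩ := hφ.comp_left v
  have hlift {w : ι → R} (hw : (φ ∘ w) ᵥ* M.map φ = 0) : ∃ a, w ᵥ* M = p • a :=
    (comp_eq_zero_iff_exists_eq_smul hker).1 <|
      funext fun j => (φ.map_vecMul M w j).trans (congrFun hw j)
  obtain ⟨a, ha⟩ := hlift hu
  obtain ⟨b, hb⟩ := hlift hv
  obtain ⟨i, hi⟩ := Function.ne_iff.1 hu0
  refine ⟨φ (v i) / φ (u i), funext fun j => ?_⟩
  have hdvd := dvd_mul_sub_mul_of_vecMul_eq_smul hp hM ha hb ((hker _).not.1 hi) j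
  rw [← hker, map_sub, map_mul, map_mul, sub_eq_zero] at hdvd
  rw [Pi.smul_apply, smul_eq_mul, div_mul_eq_mul_div]
  exact (eq_div_iff hi).2 ((mul_comm _ _).trans hdvd)

variable {n : ℕ} {A : Matrix (Fin n) (Fin n) R}

lemma exists_degree_add_one_lt_map_comp_aeval_mulVec_one_eq (hφ : Function.Surjective φ)
    (hker : ∀ a, φ a = 0 ↔ p ∣ a) (hp : Prime p) (hA : ¬ p ^ 2 ∣ (walkMatrix A).det)
    {u : Fin n → K} (hu0 : u ≠ 0) (huW : u ᵥ* (walkMatrix A).map φ = 0) (huu : u ⬝ᵥ u = 0) :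
    ∃ q : R[X], q.degree + 1 < n ∧ φ ∘ (aeval A q *ᵥ 1) = u := by
  obtain ⟨y, hy⟩ : ∃ y, (walkMatrix A).map φ *ᵥ y = u := by
    refine exists_mulVec_eq_iff_forall_dotProduct_eq_zero.2 fun v hv => ?_
    obtain ⟨c, rfl⟩ := exists_eq_smul_of_vecMul_map_eq_zero hφ hker hp hA hu0 huW hv
    rw [smul_dotProduct, huu, smul_zero]
  rw [← walkMatrix_map] at huW hy
  obtain ⟨q', hdeg, hq'⟩ := exists_degree_add_one_lt_aeval_mulVec_one_eq
    (exists_vecMul_eq_zero_iff.1 ⟨u, hu0, huW⟩) y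
  obtain ⟨q, rfl, hqdeg⟩ := exists_degree_eq_of_mem_lifts (mem_lifts_of_surjective hφ q')
  exact ⟨q, hqdeg ▸ hdeg, by rw [map_comp_aeval_mulVec_one, hq', hy]⟩

lemma exists_walkMatrix_mulVec_eq_mulVec_sub_smul (hφ : Function.Surjective φ)
    (hker : ∀ a, φ a = 0 ↔ p ∣ a) (hp : Prime p) (hA : ¬ p ^ 2 ∣ (walkMatrix A).det)
    {u : Fin n → K} (hu0 : u ≠ 0) (huW : u ᵥ* (walkMatrix A).map φ = 0) (huu : u ⬝ᵥ u = 0)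
    (m : R) : ∃ c x, φ ∘ c ≠ 0 ∧ φ ∘ x = u ∧ walkMatrix A *ᵥ c = A *ᵥ x - m • x := by
  obtain ⟨q, hqdeg, hq⟩ :=
    exists_degree_add_one_lt_map_comp_aeval_mulVec_one_eq hφ hker hp hA hu0 huW huu
  let f : R[X] := (X - C m) * q
  have hfdeg : f.degree < n := by rwa [degree_mul, degree_X_sub_C, add_comm]
  have hf0 : f.map φ ≠ 0 := by
    have hq0 : q.map φ ≠ 0 := by
      intro h0
      rw [map_comp_aeval_mulVec_one, h0, map_zero, zero_mulVec] at hq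
      exact hu0 hq.symm
    rw [Polynomial.map_mul, Polynomial.map_sub, map_X, map_C]
    exact mul_ne_zero (X_sub_C_ne_zero _) hq0
  have hcoeff : φ ∘ toFn n f = toFn n (f.map φ) := funext fun k => (coeff_map φ k).symm
  refine ⟨toFn n f, aeval A q *ᵥ 1, ?_, hq, ?_⟩
  · rw [hcoeff]
    exact toFn_ne_zero_of_degree_lt (degree_map_le.trans_lt hfdeg) hf0
  · rw [walkMatrix_mulVec_toFn A hfdeg, map_mul, ← mulVec_mulVec, map_sub, aeval_X, aeval_C,
      sub_mulVec, Algebra.algebraMap_eq_smul_one, smul_mulVec, one_mulVec]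

theorem sq_dvd_det_walkMatrix (hφ : Function.Surjective φ) (hker : ∀ a, φ a = 0 ↔ p ∣ a)
    (hp : Prime p) (hA : A.IsSymm) {u : Fin n → R} (hu0 : φ ∘ u ≠ 0)
    (huW : (φ ∘ u) ᵥ* (walkMatrix A).map φ = 0) {μ : K} (hAu : φ ∘ (A *ᵥ u) = μ • (φ ∘ u))
    (huu : p ^ 2 ∣ u ⬝ᵥ u) (huAu : p ^ 2 ∣ u ⬝ᵥ A *ᵥ u) : p ^ 2 ∣ (walkMatrix A).det := by
  by_contra hdet
  obtain ⟨m, rfl⟩ := hφ μ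
  have huu' : (φ ∘ u) ⬝ᵥ (φ ∘ u) = 0 := by
    rw [← RingHom.map_dotProduct, hker]
    exact (dvd_pow_self p two_ne_zero).trans huu
  obtain ⟨c, x, hc0, hx, hWc⟩ :=
    exists_walkMatrix_mulVec_eq_mulVec_sub_smul hφ hker hp hdet hu0 huW huu' m
  have hreduce {v : Fin n → R} := comp_eq_zero_iff_exists_eq_smul (v := v) hker
  obtain ⟨a, ha⟩ : ∃ a, u ᵥ* walkMatrix A = p • a := hreduce.1 <|
    funext fun j => (φ.map_vecMul _ u j).trans (congrFun huW j)
  obtain ⟨β, hβ⟩ : ∃ β, A *ᵥ u - m • u = p • β := hreduce.1 <| funext fun j => by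
    simpa [sub_eq_zero] using congrFun hAu j
  obtain ⟨w, hw⟩ : ∃ w, x - u = p • w := hreduce.1 <| funext fun j => by
    simpa [sub_eq_zero] using congrFun hx j
  have hWcp : walkMatrix A *ᵥ c = p • (β + A *ᵥ w - m • w) := by
    rw [hWc, sub_eq_iff_eq_add'.1 hw, mulVec_add, mulVec_smul, sub_eq_iff_eq_add'.1 hβ]
    module
  obtain ⟨i, hi⟩ := Function.ne_iff.1 hu0
  obtain ⟨k, hk⟩ := Function.ne_iff.1 hc0
  refine hdet (sq_dvd_det_of_vecMul_mulVec_eq_smul hp ha hWcp ((hker _).not.1 hi)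
    ((hker _).not.1 hk) ?_)
  exact hWc ▸ sq_dvd_dotProduct_mulVec_sub_smul hA hβ hw huu huAu

theorem dvd_of_mul_eq_mul {m : Type*} [Fintype m] (hφ : Function.Surjective φ)
    (hker : ∀ a, φ a = 0 ↔ p ∣ a) (hp : Prime p) (hA : A.IsSymm)
    (hdet : ¬ p ^ 2 ∣ (walkMatrix A).det) {P : Matrix (Fin n) m R} {B D : Matrix m m R} {d : m → R}
    (hAP : A * P = P * B) (hPe : Pᵀ *ᵥ 1 = p • d) (hPP : Pᵀ * P = p ^ 2 • D) (i : Fin n) (j : m) :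
    p ∣ P i j := by
  classical
  have hrange (v : m → R) : (φ ∘ (P *ᵥ v)) ᵥ* (walkMatrix A).map φ = 0 := by
    have hPA : Pᵀ * A = Bᵀ * Pᵀ := by rw [← transpose_mul, ← hAP, transpose_mul, hA.eq]
    have hPW (i : m) (k : Fin n) : p ∣ (Pᵀ * walkMatrix A) i k := by
      rw [mul_walkMatrix_apply hPA, hPe, mulVec_smul]
      exact dvd_mul_right _ _
    ext k
    rw [← RingHom.map_vecMul, Pi.zero_apply, hker, ← vecMul_transpose, vecMul_vecMul]
    exact Finset.dvd_sum fun i _ => (hPW i k).mul_left _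
  have hdot (v w : m → R) : p ^ 2 ∣ (P *ᵥ v) ⬝ᵥ P *ᵥ w := by
    rw [dotProduct_mulVec, ← mulVec_transpose, mulVec_mulVec, hPP, smul_mulVec, smul_dotProduct]
    exact dvd_mul_right _ _
  have hAPv (v : m → R) : A *ᵥ (P *ᵥ v) = P *ᵥ (B *ᵥ v) := by
    rw [mulVec_mulVec, hAP, mulVec_mulVec]
  have hPv (v : m → R) : φ ∘ (P *ᵥ v) = 0 := by
    by_contra hv
    obtain ⟨μ, hμ⟩ := exists_eq_smul_of_vecMul_map_eq_zero hφ hker hp hdet hv (hrange v)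
      (hrange (B *ᵥ v))
    exact hdet (sq_dvd_det_walkMatrix hφ hker hp hA hv (hrange v) (hAPv v ▸ hμ)
      (hdot v v) (hAPv v ▸ hdot v (B *ᵥ v)))
  rw [← hker]
  simpa using congrFun (hPv (Pi.single j 1)) i

end Reduction

section ClearDenominators

variable {m n R S : Type*} [Fintype m] [CommRing R] [CommRing S]
  {φ : R →+* S} {P : Matrix m n R} {Q : Matrix m n S} {r : R}

lemma transpose_mul_self_eq_of_map_eq_smul [DecidableEq n] (hφ : Function.Injective φ)
    (hP : P.map φ = φ r • Q) (hQ : Qᵀ * Q = 1) : Pᵀ * P = r ^ 2 • 1 := by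
  refine map_injective hφ ?_
  beta_reduce
  rw [Matrix.map_mul, transpose_map, hP, transpose_smul, Matrix.smul_mul, Matrix.mul_smul, hQ,
    smul_smul, ← sq, ← map_pow, Matrix.map_smul' φ _ _ (map_mul φ),
    Matrix.map_one φ (map_zero φ) (map_one φ)]

variable [Fintype n]

lemma mul_eq_mul_of_map_eq_smul [DecidableEq m] (hφ : Function.Injective φ)
    (hP : P.map φ = φ r • Q) (hQ : Q * Qᵀ = 1) {A : Matrix m m R} {B : Matrix n n R}
    (hB : Qᵀ * A.map φ * Q = B.map φ) : A * P = P * B := by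
  refine map_injective hφ ?_
  beta_reduce
  rw [Matrix.map_mul, Matrix.map_mul, hP, ← hB, Matrix.mul_smul, Matrix.smul_mul,
    Matrix.mul_assoc Qᵀ, ← Matrix.mul_assoc Q, hQ, Matrix.one_mul]

lemma transpose_mulVec_one_eq_of_map_eq_smul [DecidableEq n] (hφ : Function.Injective φ)
    (hP : P.map φ = φ r • Q) (hQ : Qᵀ * Q = 1) (hQe : Q *ᵥ 1 = 1) : Pᵀ *ᵥ 1 = r • 1 := by
  have hQte : Qᵀ *ᵥ 1 = 1 := by rw [← hQe, mulVec_mulVec, hQ, one_mulVec]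
  have hone : φ ∘ (1 : m → R) = 1 := funext fun _ => map_one φ
  ext i
  apply hφ
  rw [RingHom.map_mulVec, hone, transpose_map, hP, transpose_smul, smul_mulVec, hQte]
  simp only [Pi.smul_apply, Pi.one_apply, smul_eq_mul, map_mul, map_one]

end ClearDenominators

section Level

/-- `ℓ` is the level of the rational matrix `Q`: the least positive integer for which `ℓQ` is an
integer matrix, that is, the exact denominator to clear from `Q`. This is a relation, so no junk
value is needed for an infinite matrix without a common denominator. -/
def IsLevel {m n : Type*} (Q : Matrix m n ℚ) (ℓ : ℕ) : Prop :=
  IsLeast {k : ℕ | 0 < k ∧ ∀ i j, ∃ z : ℤ, (k : ℚ) * Q i j = (z : ℚ)} ℓ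

variable {m n : Type*} {Q : Matrix m n ℚ} {ℓ : ℕ}

lemma IsLevel.exists_map_intCast_eq_smul (h : IsLevel Q ℓ) :
    ∃ P : Matrix m n ℤ, P.map (Int.castRingHom ℚ) = Int.castRingHom ℚ ℓ • Q := by
  choose P hP using h.1.2
  exact ⟨of P, Matrix.ext fun i j => (hP i j).symm⟩

lemma IsLevel.not_dvd_of_forall_dvd (h : IsLevel Q ℓ) {P : Matrix m n ℤ}
    (hP : P.map (Int.castRingHom ℚ) = Int.castRingHom ℚ ℓ • Q) {d : ℕ} (hd : 1 < d)
    (hdP : ∀ i j, (d : ℤ) ∣ P i j) : ¬ d ∣ ℓ := by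
  rintro ⟨k, rfl⟩
  have hk : 0 < k := Nat.pos_of_mul_pos_left h.1.1
  refine (h.2 ⟨hk, fun i j => ?_⟩).not_gt (lt_mul_of_one_lt_left hk hd)
  obtain ⟨z, hz⟩ := hdP i j
  have hentry : (P i j : ℚ) = (d * k : ℕ) * Q i j := congrFun (congrFun hP i) j
  refine ⟨z, mul_left_cancel₀ (Nat.cast_ne_zero.2 (zero_lt_one.trans hd).ne' : (d : ℚ) ≠ 0) ?_⟩
  rw [hz] at hentry
  push_cast at hentry
  linear_combination -hentry

end Level

lemma adjMat_isSymm {n : ℕ} (R : Type*) [Zero R] [One R] (G : SimpleGraph (Fin n)) :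
    (adjMat R G).IsSymm := by
  classical exact Matrix.ext fun i j => if_congr (G.adj_comm j i) rfl rfl

lemma adjMat_map {n : ℕ} {R S : Type*} [NonAssocSemiring R] [NonAssocSemiring S] (φ : R →+* S)
    (G : SimpleGraph (Fin n)) : (adjMat R G).map φ = adjMat S G := by
  ext i j
  simp only [adjMat, map_apply, of_apply, apply_ite φ, map_one, map_zero]

lemma exists_map_eq_of_forall_eq_zero_or_eq_one {m n R S : Type*} [NonAssocSemiring R]
    [NonAssocSemiring S] (φ : R →+* S) {M : Matrix m n S} (hM : ∀ i j, M i j = 0 ∨ M i j = 1) :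
    ∃ N : Matrix m n R, N.map φ = M := by
  have hlift (i j) : ∃ a, φ a = M i j :=
    (hM i j).elim (fun h => ⟨0, h ▸ map_zero φ⟩) fun h => ⟨1, h ▸ map_one φ⟩
  choose N hN using hlift
  exact ⟨of N, Matrix.ext hN⟩

theorem stmt_4_general {n : ℕ} {A B : Matrix (Fin n) (Fin n) ℤ} (hA : A.IsSymm)
    {Q : Matrix (Fin n) (Fin n) ℚ} (hQ : Qᵀ * Q = 1) (hQe : Q *ᵥ 1 = 1)
    (hB : Qᵀ * A.map (Int.castRingHom ℚ) * Q = B.map (Int.castRingHom ℚ)) {ℓ : ℕ}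
    (hℓ : IsLevel Q ℓ) {p : ℕ} (hp : p.Prime) (hdet : ¬ (p : ℤ) ^ 2 ∣ (walkMatrix A).det) :
    ¬ p ∣ ℓ := by
  intro hpℓ
  have : Fact p.Prime := ⟨hp⟩
  obtain ⟨P, hP⟩ := hℓ.exists_map_intCast_eq_smul
  have hcast : Function.Injective (Int.castRingHom ℚ) := Int.cast_injective
  obtain ⟨k, hk⟩ : (p : ℤ) ∣ ℓ := Int.natCast_dvd_natCast.2 hpℓ
  have hAP : A * P = P * B := mul_eq_mul_of_map_eq_smul hcast hP (mul_eq_one_comm.1 hQ) hB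
  have hPe : Pᵀ *ᵥ 1 = (p : ℤ) • k • 1 := by
    rw [transpose_mulVec_one_eq_of_map_eq_smul hcast hP hQ hQe, hk, mul_smul]
  have hPP : Pᵀ * P = (p : ℤ) ^ 2 • k ^ 2 • 1 := by
    rw [transpose_mul_self_eq_of_map_eq_smul hcast hP hQ, hk, mul_pow, mul_smul]
  refine hℓ.not_dvd_of_forall_dvd hP hp.one_lt (fun i j => ?_) hpℓ
  exact dvd_of_mul_eq_mul (φ := Int.castRingHom (ZMod p)) ZMod.intCast_surjective
    (fun a => ZMod.intCast_zmod_eq_zero_iff_dvd a p) (Nat.prime_iff_prime_int.1 hp) hA hdet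
    hAP hPe hPP i j

/-- **Theorem 3.1.** Let `p` be an odd prime dividing `det W` exactly once.
Then `p` does not divide the level `ℓ` of any `Q ∈ 𝒬_G`. -/
theorem stmt_4 {n : ℕ} (G : SimpleGraph (Fin n))
    (A : Matrix (Fin n) (Fin n) ℚ) (hA : A = adjMat ℚ G)
    (W : Matrix (Fin n) (Fin n) ℤ) (hW : W = walkMatrix (adjMat ℤ G))
    (hctrl : W.det ≠ 0)
    (Q : Matrix (Fin n) (Fin n) ℚ)
    (hQorth : Qᵀ * Q = 1) (hQe : Q *ᵥ (fun _ => 1) = fun _ => 1)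
    (hsymm : (Qᵀ * A * Q).IsSymm)
    (h01 : ∀ i j, (Qᵀ * A * Q) i j = 0 ∨ (Qᵀ * A * Q) i j = 1)
    (hdiag : ∀ i, (Qᵀ * A * Q) i i = 0)
    (ℓ : ℕ)
    (hlevel : IsLeast {m : ℕ | 0 < m ∧ ∀ i j, ∃ z : ℤ, (m : ℚ) * Q i j = (z : ℚ)} ℓ)
    (p : ℕ) (hp : p.Prime) (hodd : Odd p)
    (hdvd : (p : ℤ) ∣ W.det) (hnsq : ¬ (p : ℤ) ^ 2 ∣ W.det) :
    ¬ p ∣ ℓ := by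
  subst hA hW
  obtain ⟨B, hB⟩ := exists_map_eq_of_forall_eq_zero_or_eq_one (Int.castRingHom ℚ) h01
  rw [← adjMat_map (Int.castRingHom ℚ) G] at hB
  exact stmt_4_general (adjMat_isSymm ℤ G) hQorth hQe hB.symm hlevel hp hnsq
end
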